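/- Part (8) of Lemma 5: 4·(2 + η₁ + 2η₀ + 3η₃)·(2 + η₃ + 2η₂ + 3η₁) ≡ −2(1−4y)·H + 5p + 1 (mod (4^p − 1)/3). -/

import Mathlib

open Finset

/-- The cyclotomic class `D_i` of order 4 modulo `p` with respect to the
primitive root `θ`: `{θ^(i+4j) mod p : 0 ≤ j < (p-1)/4}`. -/
def cycD (p θ i : ℕ) : Finset ℕ :=
  (Finset.range ((p - 1) / 4)).image fun j => θ ^ (i + 4 * j) % p

/-- `η_i = Σ_{t ∈ D_i} 4^t` as an integer. -/
def eta4 (p θ : ℕ) (i : ℕ) : ℤ := ∑ t ∈ cycD p θ i, (4 : ℤ) ^ t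

/-- `H = η₀ + η₂ − η₁ − η₃`. -/
def Hval (p θ : ℕ) : ℤ := eta4 p θ 0 + eta4 p θ 2 - eta4 p θ 1 - eta4 p θ 3

/-!
Let `χ` be the quartic character of `ZMod p` with `χ θ = i`, let `J = jacobiSum χ χ`, and let `G`,
`G'`, `H` be the Gauss sums of `χ`, `χ⁻¹`, `χ ^ 2`. Since `(4 ^ p - 1) / 3` is the value at `4` of
the `p`-th cyclotomic polynomial, it suffices to prove the identity with `4` replaced by a primitive
`p`-th root of unity; the `η_i` then become Gaussian periods, and `η₀ + η₂ - η₁ - η₃` becomes `H`.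
The two factors on the left become `(1 - H) / 2 ± ((1 + i) * G + (1 - i) * G') / 2`, so the product
follows from `H ^ 2 = p`, `G * G' = -p`, `G ^ 2 = J * H` and `G' ^ 2 = star J * H`, and the result
involves `J` only through its imaginary part.

Expanding the cyclotomic number `(0, 1)` in Jacobi sums gives
`16 * (0, 1) = p + 1 - 2 * re J - 4 * im J`. Together with `p = (re J) ^ 2 + (im J) ^ 2` and the
normalisation of `y`, this forces `im J = 2 * y`.
-/

-- The circle `u ^ 2 + v ^ 2 = p` meets the line `u + 2 * v = 4 * y - x` in `(-x, 2 * y)` and one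
-- further point, whose coordinates are integers only if the line is tangent.
theorem eq_two_mul_of_prime_eq_sq_add_sq {p : ℕ} (hp : p.Prime) {x y u v : ℤ}
    (hxy : (p : ℤ) = x ^ 2 + 4 * y ^ 2) (huv : (p : ℤ) = u ^ 2 + v ^ 2)
    (h : u + 2 * v = 4 * y - x) : v = 2 * y := by
  have hsq : (2 * u - v) ^ 2 = (2 * x + 2 * y) ^ 2 := by
    linear_combination 5 * hxy - 5 * huv - (u + 2 * v + 4 * y - x) * h
  rcases sq_eq_sq_iff_eq_or_eq_neg.1 hsq with h' | h'
  · obtain ⟨k, hk⟩ : ∃ k, x = 5 * k - y := ⟨(x + y) / 5, by omega⟩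
    have hp_eq : (p : ℤ) = 5 * (4 * k ^ 2 + (k - y) ^ 2) := by
      rw [hxy, hk]
      ring
    have hp5 : p = 5 := ((Nat.prime_dvd_prime_iff_eq Nat.prime_five hp).1 <| by
      exact_mod_cast Dvd.intro _ hp_eq.symm).symm
    have hk0 : k = 0 := by
      subst hp5
      by_contra hk0
      have : 0 < k ^ 2 := by positivity
      push_cast at hp_eq
      nlinarith [sq_nonneg (k - y)]
    omega
  · omega

section JacobiSums

variable {F : Type*} [Field F] [Fintype F]

theorem sum_mulChar_mul_mulChar_add_one {R : Type*} [CommRing R] (χ φ : MulChar F R) :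
    ∑ v, χ v * φ (v + 1) = χ (-1) * jacobiSum χ φ := by
  rw [jacobiSum, mul_sum, ← Equiv.sum_comp (Equiv.neg F)]
  refine sum_congr rfl fun v _ ↦ ?_
  rw [Equiv.neg_apply, ← neg_one_mul v, map_mul, neg_one_mul, mul_assoc, neg_add_eq_sub]

theorem jacobiSum_eq_apply_neg_one_mul_jacobiSum_inv {R : Type*} [CommRing R]
    (χ φ : MulChar F R) :
    jacobiSum χ φ = χ (-1) * jacobiSum χ (χ * φ)⁻¹ := by
  classical
  rw [jacobiSum, jacobiSum, mul_sum, ← sum_erase (a := 1) univ (by simp [MulChar.map_zero]),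
    ← sum_erase (a := 1) univ (f := fun v ↦ χ (-1) * _) (by simp [MulChar.map_zero])]
  have hinv : ∀ v : F, v ≠ 1 → v / (v - 1) ≠ 1 ∧ v / (v - 1) / (v / (v - 1) - 1) = v := by
    intro v hv
    have hv' : v - 1 ≠ 0 := sub_ne_zero.2 hv
    constructor
    · rw [Ne, div_eq_one_iff_eq hv']
      exact fun h ↦ one_ne_zero (α := F) (by linear_combination h)
    · field_simp
      simp
  refine sum_nbij' (fun v ↦ v / (v - 1)) (fun v ↦ v / (v - 1)) ?_ ?_ ?_ ?_ ?_
  · simpa using fun v hv ↦ (hinv v hv).1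
  · simpa using fun v hv ↦ (hinv v hv).1
  · simpa using fun v hv ↦ (hinv v hv).2
  · simpa using fun v hv ↦ (hinv v hv).2
  · intro v hv
    have hv' : v - 1 ≠ 0 := sub_ne_zero.2 (ne_of_mem_erase hv)
    have hsub : 1 - v / (v - 1) = (1 - v)⁻¹ := by
      rw [← neg_sub v 1]
      field_simp
      ring
    rw [hsub, MulChar.inv_apply', inv_inv, MulChar.mul_apply, ← mul_assoc, ← mul_assoc, ← map_mul,
      ← map_mul]
    congr 2
    rw [← neg_sub v 1]
    field_simp

theorem jacobiSum_inv_inv (χ φ : MulChar F ℂ) :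
    jacobiSum χ⁻¹ φ⁻¹ = star (jacobiSum χ φ) := by
  simp only [jacobiSum, star_sum, star_mul', MulChar.star_apply']

theorem normSq_jacobiSum {χ φ : MulChar F ℂ} (hχ : χ ≠ 1) (hφ : φ ≠ 1) (hχφ : χ * φ ≠ 1) :
    Complex.normSq (jacobiSum χ φ) = Fintype.card F := by
  have hchar : ringChar ℂ ≠ ringChar F := by
    rw [ringChar.eq_zero]
    exact (CharP.ringChar_ne_zero_of_finite F).symm
  have hmul := jacobiSum_mul_jacobiSum_inv hchar hχ hφ hχφ
  rw [jacobiSum_inv_inv, Complex.star_def, Complex.mul_conj] at hmul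
  exact_mod_cast hmul

theorem exists_int_jacobiSum_eq {χ φ : MulChar F ℂ} (hχ : χ ^ 4 = 1) (hφ : φ ^ 4 = 1) :
    ∃ u v : ℤ, jacobiSum χ φ = u + v * Complex.I := by
  have hI : IsPrimitiveRoot Complex.I 4 := Complex.isPrimitiveRoot_I
  have hle : Algebra.adjoin ℤ {Complex.I} ≤ GaussianInt.toComplex.toIntAlgHom.range :=
    Algebra.adjoin_le <| by
      simpa using ⟨(⟨0, 1⟩ : GaussianInt), by simp [GaussianInt.toComplex_def]⟩
  obtain ⟨z, hz⟩ := hle (jacobiSum_mem_algebraAdjoin_of_pow_eq_one hχ hφ hI)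
  exact ⟨z.re, z.im, by rw [← hz]; simp [GaussianInt.toComplex_def]⟩

end JacobiSums

section CyclotomicSums

variable {F R : Type*} [Field F] [Field R] [DecidableEq R]

theorem sum_inv_pow_mul_mulChar_pow_apply {n : ℕ} {χ : MulChar F R} (hχ : χ ^ n = 1) {z : R}
    (hz : z ^ n = 1) (hn : n ≠ 0) (v : F) :
    ∑ m ∈ range n, z⁻¹ ^ m * (χ ^ m) v = if χ v = z then (n : R) else 0 := by
  have hz0 : z ≠ 0 := by
    rintro rfl
    simp [hn] at hz
  rcases eq_or_ne v 0 with rfl | hv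
  · simp [MulChar.map_zero, hz0.symm]
  have hpow (m : ℕ) : (χ ^ m) v = χ v ^ m := MulChar.pow_apply_coe χ m (Units.mk0 v hv)
  have hroot : (z⁻¹ * χ v) ^ n = 1 := by
    rw [mul_pow, inv_pow, hz, ← hpow, hχ, MulChar.one_apply hv.isUnit, inv_one, one_mul]
  simp only [hpow, ← mul_pow]
  split_ifs with h
  · simp [h, hz0]
  · have hne : z⁻¹ * χ v ≠ 1 := fun h' ↦ h (by rwa [inv_mul_eq_one₀ hz0, eq_comm] at h')
    rw [geom_sum_eq hne, hroot, sub_self, zero_div]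

variable [Fintype F]

/-- The cyclotomic class of `F` on which the multiplicative character `χ` takes the value `z`.
When `χ` has order `n` and `z` runs through the `n`-th roots of unity, these are the cosets of the
`n`-th powers in `Fˣ`. -/
def cyclotomicClass (χ : MulChar F R) (z : R) : Finset F := {v | χ v = z}

/-- The Gaussian period of `ψ` over the cyclotomic class `χ = z`. -/
def gaussPeriod (χ : MulChar F R) (ψ : AddChar F R) (z : R) : R :=
  ∑ v ∈ cyclotomicClass χ z, ψ v

/-- The cyclotomic number `(z, w)`: how often the class `χ = z` is followed by the class `χ = w`.
Classes are indexed by the values of `χ` rather than by discrete logarithms. -/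
def cyclotomicNumber (χ : MulChar F R) (z w : R) : ℕ :=
  #{v : F | χ v = z ∧ χ (v + 1) = w}

theorem natCast_mul_gaussPeriod {n : ℕ} {χ : MulChar F R} (hχ : χ ^ n = 1) {z : R}
    (hz : z ^ n = 1) (hn : n ≠ 0) (ψ : AddChar F R) :
    n * gaussPeriod χ ψ z = ∑ m ∈ range n, z⁻¹ ^ m * gaussSum (χ ^ m) ψ := by
  calc
    n * gaussPeriod χ ψ z = ∑ v, (if χ v = z then (n : R) else 0) * ψ v := by
      simp [gaussPeriod, cyclotomicClass, mul_sum, sum_filter]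
    _ = ∑ v, ∑ m ∈ range n, z⁻¹ ^ m * ((χ ^ m) v * ψ v) := by
      simp only [← sum_inv_pow_mul_mulChar_pow_apply hχ hz hn, sum_mul, mul_assoc]
    _ = ∑ m ∈ range n, z⁻¹ ^ m * gaussSum (χ ^ m) ψ := by
      rw [sum_comm]
      simp only [gaussSum, mul_sum]

theorem sq_mul_cyclotomicNumber {n : ℕ} {χ : MulChar F R} (hχ : χ ^ n = 1) {z w : R}
    (hz : z ^ n = 1) (hw : w ^ n = 1) (hn : n ≠ 0) :
    (n : R) ^ 2 * cyclotomicNumber χ z w = ∑ m ∈ range n, ∑ k ∈ range n,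
      z⁻¹ ^ m * w⁻¹ ^ k * ((χ ^ m) (-1) * jacobiSum (χ ^ m) (χ ^ k)) := by
  calc
    (n : R) ^ 2 * cyclotomicNumber χ z w =
        ∑ v, (if χ v = z then (n : R) else 0) * (if χ (v + 1) = w then (n : R) else 0) := by
      simp only [cyclotomicNumber, card_filter, Nat.cast_sum, mul_sum]
      refine sum_congr rfl fun v _ ↦ ?_
      split_ifs <;> simp_all [sq]
    _ = ∑ v, ∑ m ∈ range n, ∑ k ∈ range n,
          z⁻¹ ^ m * w⁻¹ ^ k * ((χ ^ m) v * (χ ^ k) (v + 1)) := by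
      simp only [← sum_inv_pow_mul_mulChar_pow_apply hχ hz hn,
        ← sum_inv_pow_mul_mulChar_pow_apply hχ hw hn, sum_mul_sum, mul_mul_mul_comm]
    _ = _ := by
      rw [sum_comm]
      refine sum_congr rfl fun m _ ↦ ?_
      rw [sum_comm]
      simp only [← mul_sum, sum_mulChar_mul_mulChar_add_one]

end CyclotomicSums

section QuarticCharacters

open Complex

theorem pow_three_eq_inv_of_orderOf_eq_four {G : Type*} [Group G] {g : G} (hg : orderOf g = 4) :
    g ^ 3 = g⁻¹ :=
  eq_inv_of_mul_eq_one_left <| by rw [← pow_succ, orderOf_dvd_iff_pow_eq_one.1 hg.dvd]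

variable {F : Type*} [Field F] [Fintype F]

section CommRing

variable {R : Type*} [CommRing R] {χ : MulChar F R} {ψ : AddChar F R}

theorem jacobiSum_self_sq_of_orderOf_eq_four (hχ : orderOf χ = 4) :
    jacobiSum χ (χ ^ 2) = χ (-1) * jacobiSum χ χ := by
  rw [jacobiSum_eq_apply_neg_one_mul_jacobiSum_inv, ← pow_succ',
    pow_three_eq_inv_of_orderOf_eq_four hχ, inv_inv]

variable [IsDomain R]

theorem gaussSum_sq_eq_jacobiSum_mul_gaussSum (hχ : χ ^ 2 ≠ 1) (ψ : AddChar F R) :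
    gaussSum χ ψ ^ 2 = jacobiSum χ χ * gaussSum (χ ^ 2) ψ := by
  rw [sq] at hχ
  rw [sq, sq, ← jacobiSum_mul_nontrivial hχ, mul_comm]

theorem gaussSum_sq_sq_of_orderOf_eq_four (hχ : orderOf χ = 4) (hψ : ψ.IsPrimitive) :
    gaussSum (χ ^ 2) ψ ^ 2 = Fintype.card F := by
  have hne : χ ^ 2 ≠ 1 := pow_ne_one_of_lt_orderOf two_ne_zero (by omega)
  have hsq : (χ ^ 2) ^ 2 = 1 := by rw [← pow_mul, orderOf_dvd_iff_pow_eq_one.1 hχ.dvd]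
  rw [gaussSum_sq hne (MulChar.isQuadratic_iff_sq_eq_one.2 hsq) hψ,
    MulChar.pow_apply' _ two_ne_zero, ← map_pow, neg_one_sq, map_one, one_mul]

theorem gaussSum_mul_gaussSum_inv_of_orderOf_eq_four (hχ : orderOf χ = 4) (hψ : ψ.IsPrimitive) :
    gaussSum χ ψ * gaussSum χ⁻¹ ψ = χ (-1) * Fintype.card F := by
  have hne : χ ≠ 1 := by
    rintro rfl
    simp at hχ
  simpa only [hχ, pow_three_eq_inv_of_orderOf_eq_four hχ] using
    gaussSum_mul_gaussSum_pow_orderOf_sub_one hne hψ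

theorem jacobiSum_sq_sq_of_orderOf_eq_four (hχ : orderOf χ = 4) :
    jacobiSum (χ ^ 2) (χ ^ 2) = -1 := by
  have hχ_sq : χ ^ 2 ≠ 1 := pow_ne_one_of_lt_orderOf two_ne_zero (by omega)
  have hinv : (χ ^ 2)⁻¹ = χ ^ 2 :=
    inv_eq_of_mul_eq_one_right (by rw [← pow_add, orderOf_dvd_iff_pow_eq_one.1 hχ.dvd])
  have hneg_one : (χ ^ 2) (-1) = 1 := by
    rw [MulChar.pow_apply' _ two_ne_zero, ← map_pow, neg_one_sq, map_one]
  have hJ := jacobiSum_nontrivial_inv hχ_sq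
  rwa [hinv, hneg_one] at hJ

end CommRing

section Field

variable {R : Type*} [Field R] [DecidableEq R] {χ : MulChar F R} {ψ : AddChar F R}

theorem four_mul_gaussPeriod (hχ : orderOf χ = 4) (hψ : ψ ≠ 1) {z : R} (hz : z ^ 4 = 1) :
    4 * gaussPeriod χ ψ z =
      -1 + z⁻¹ * gaussSum χ ψ + z⁻¹ ^ 2 * gaussSum (χ ^ 2) ψ + z⁻¹ ^ 3 * gaussSum χ⁻¹ ψ := by
  have h := natCast_mul_gaussPeriod (orderOf_dvd_iff_pow_eq_one.1 hχ.dvd) hz four_ne_zero ψ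
  simpa [sum_range_succ, gaussSum_one_left hψ, pow_three_eq_inv_of_orderOf_eq_four hχ] using h

end Field

variable {χ : MulChar F ℂ} {ψ : AddChar F ℂ}

theorem gaussSum_inv_sq_of_orderOf_eq_four (hχ : orderOf χ = 4) (ψ : AddChar F ℂ) :
    gaussSum χ⁻¹ ψ ^ 2 = star (jacobiSum χ χ) * gaussSum (χ ^ 2) ψ := by
  have hsq : χ⁻¹ ^ 2 = χ ^ 2 := by
    rw [inv_pow, inv_eq_iff_mul_eq_one, ← pow_add, orderOf_dvd_iff_pow_eq_one.1 hχ.dvd]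
  have hne : χ ^ 2 ≠ 1 := pow_ne_one_of_lt_orderOf two_ne_zero (by omega)
  rw [gaussSum_sq_eq_jacobiSum_mul_gaussSum (hsq ▸ hne), hsq, jacobiSum_inv_inv]

theorem gaussPeriod_alternating_sum (hχ : orderOf χ = 4) (hψ : ψ ≠ 1) :
    gaussPeriod χ ψ 1 + gaussPeriod χ ψ (-1) - gaussPeriod χ ψ I - gaussPeriod χ ψ (-I) =
      gaussSum (χ ^ 2) ψ := by
  have h1 := four_mul_gaussPeriod hχ hψ (one_pow 4)
  have hneg1 := four_mul_gaussPeriod (z := -1) hχ hψ (by norm_num)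
  have hI := four_mul_gaussPeriod hχ hψ I_pow_four
  have hnegI := four_mul_gaussPeriod (z := -I) hχ hψ (by rw [Even.neg_pow (by decide), I_pow_four])
  simp only [inv_one, inv_neg, inv_I, neg_neg] at h1 hI hneg1 hnegI
  linear_combination (h1 + hneg1 - hI - hnegI) / 4 - gaussSum (χ ^ 2) ψ / 2 * I_sq

theorem gaussPeriod_weighted_sum (hχ : orderOf χ = 4) (hψ : ψ ≠ 1) {c : ℂ} (hc : c ^ 4 = 1) :
    2 + gaussPeriod χ ψ (c * I) + 2 * gaussPeriod χ ψ c + 3 * gaussPeriod χ ψ (-(c * I)) =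
      (1 - c⁻¹ ^ 2 * gaussSum (χ ^ 2) ψ) / 2 +
        (c⁻¹ * (1 + I) * gaussSum χ ψ + c⁻¹ ^ 3 * (1 - I) * gaussSum χ⁻¹ ψ) / 2 := by
  have hcI : (c * I) ^ 4 = 1 := by rw [mul_pow, hc, I_pow_four, one_mul]
  have h0 := four_mul_gaussPeriod hχ hψ hc
  have h1 := four_mul_gaussPeriod hχ hψ hcI
  have h3 := four_mul_gaussPeriod (z := -(c * I)) hχ hψ (by rw [Even.neg_pow (by decide), hcI])
  simp only [inv_neg, mul_inv, inv_I, mul_neg, neg_neg] at h1 h3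
  linear_combination (h1 + 2 * h0 + 3 * h3) / 4 + (c⁻¹ ^ 2 * gaussSum (χ ^ 2) ψ
    + c⁻¹ ^ 3 * I * gaussSum χ⁻¹ ψ / 2) * I_sq

theorem gaussPeriod_weighted_sum_mul (hχ : orderOf χ = 4) (hodd : χ (-1) = -1)
    (hψ : ψ.IsPrimitive) :
    4 * (2 + gaussPeriod χ ψ I + 2 * gaussPeriod χ ψ 1 + 3 * gaussPeriod χ ψ (-I)) *
        (2 + gaussPeriod χ ψ (-I) + 2 * gaussPeriod χ ψ (-1) + 3 * gaussPeriod χ ψ I) =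
      -2 * (1 - 2 * (jacobiSum χ χ).im) * (gaussPeriod χ ψ 1 + gaussPeriod χ ψ (-1)
        - gaussPeriod χ ψ I - gaussPeriod χ ψ (-I)) + 5 * Fintype.card F + 1 := by
  have hψ1 : ψ ≠ 1 := by
    simpa using hψ one_ne_zero
  have hplus := gaussPeriod_weighted_sum hχ hψ1 (one_pow 4)
  have hminus := gaussPeriod_weighted_sum (c := -1) hχ hψ1 (by norm_num)
  have hne : χ ^ 2 ≠ 1 := pow_ne_one_of_lt_orderOf two_ne_zero (by omega)
  have hJ : jacobiSum χ χ - star (jacobiSum χ χ) = 2 * (jacobiSum χ χ).im * I := by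
    rw [star_def, sub_conj, ofReal_mul, ofReal_ofNat]
  have hmul := gaussSum_mul_gaussSum_inv_of_orderOf_eq_four hχ hψ
  rw [hodd] at hmul
  simp only [one_mul, neg_one_mul, neg_neg] at hplus hminus
  rw [hplus, hminus, gaussPeriod_alternating_sum hχ hψ1]
  linear_combination gaussSum_sq_sq_of_orderOf_eq_four hχ hψ
    - 2 * I * gaussSum_sq_eq_jacobiSum_mul_gaussSum hne ψ
    + 2 * I * gaussSum_inv_sq_of_orderOf_eq_four hχ ψ - 4 * hmul
    - 2 * I * gaussSum (χ ^ 2) ψ * hJ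
    + (2 * gaussSum χ ψ * gaussSum χ⁻¹ ψ - gaussSum χ ψ ^ 2 - gaussSum χ⁻¹ ψ ^ 2
      - 4 * gaussSum (χ ^ 2) ψ * (jacobiSum χ χ).im) * I_sq

theorem sixteen_mul_cyclotomicNumber (hχ : orderOf χ = 4) (hodd : χ (-1) = -1) :
    16 * (cyclotomicNumber χ 1 I : ℝ) =
      Fintype.card F + 1 - 2 * (jacobiSum χ χ).re - 4 * (jacobiSum χ χ).im := by
  have h4 : χ ^ 4 = 1 := orderOf_dvd_iff_pow_eq_one.1 hχ.dvd
  have h3 : χ ^ 3 = χ⁻¹ := pow_three_eq_inv_of_orderOf_eq_four hχ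
  have h2 : χ ^ 2 ≠ 1 := pow_ne_one_of_lt_orderOf two_ne_zero (by omega)
  have h1 : χ ≠ 1 := fun h ↦ h2 (by rw [h, one_pow])
  have hinv : χ⁻¹ ≠ 1 := inv_ne_one.2 h1
  have hsq_inv : (χ ^ 2)⁻¹ = χ ^ 2 := inv_eq_of_mul_eq_one_right (by rw [← pow_add, h4])
  have hinv_neg_one : χ⁻¹ (-1) = -1 := by rw [MulChar.inv_apply', inv_neg_one, hodd]
  have hsq_neg_one : (χ ^ 2) (-1) = 1 := by
    rw [MulChar.pow_apply' _ two_ne_zero, hodd, neg_one_sq]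
  have hJ_inv : jacobiSum χ χ⁻¹ = 1 := by
    rw [jacobiSum_nontrivial_inv h1, hodd, neg_neg]
  have hJ_sq : jacobiSum χ (χ ^ 2) = -jacobiSum χ χ := by
    rw [jacobiSum_self_sq_of_orderOf_eq_four hχ, hodd, neg_one_mul]
  have hJ_inv_sq : jacobiSum χ⁻¹ (χ ^ 2) = -star (jacobiSum χ χ) := by
    have := jacobiSum_self_sq_of_orderOf_eq_four (χ := χ⁻¹) (by rwa [orderOf_inv])
    rwa [inv_pow, hsq_inv, hinv_neg_one, neg_one_mul, jacobiSum_inv_inv] at this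
  have hJ_sq_sq := jacobiSum_sq_sq_of_orderOf_eq_four hχ
  have h := sq_mul_cyclotomicNumber h4 (one_pow 4) I_pow_four four_ne_zero
  simp only [sum_range_succ, range_zero, sum_empty, pow_zero, pow_one, h3, inv_one, inv_I,
    MulChar.one_apply isUnit_one.neg, hodd, hsq_neg_one, hinv_neg_one, jacobiSum_one_one,
    jacobiSum_one_nontrivial h1, jacobiSum_one_nontrivial h2, jacobiSum_one_nontrivial hinv,
    jacobiSum_comm _ (1 : MulChar F ℂ), jacobiSum_comm (χ ^ 2) χ, jacobiSum_comm (χ ^ 2) χ⁻¹,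
    jacobiSum_comm χ⁻¹ χ, jacobiSum_inv_inv, hJ_inv, hJ_sq, hJ_inv_sq, hJ_sq_sq] at h
  have hre := add_conj (jacobiSum χ χ)
  have him := sub_conj (jacobiSum χ χ)
  rw [← star_def] at hre him
  apply ofReal_injective
  push_cast at h hre him ⊢
  linear_combination h - hre + 2 * I * him + (jacobiSum χ χ + star (jacobiSum χ χ)
    + 2 * I * star (jacobiSum χ χ) - 2 + 2 * I + 4 * (jacobiSum χ χ).im) * I_sq

theorem exists_int_cyclotomicNumber_eq (hχ : orderOf χ = 4) (hodd : χ (-1) = -1) :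
    ∃ u v : ℤ, (jacobiSum χ χ).im = v ∧ (Fintype.card F : ℤ) = u ^ 2 + v ^ 2 ∧
      16 * (cyclotomicNumber χ 1 I : ℤ) = Fintype.card F + 1 - 2 * u - 4 * v := by
  have h4 : χ ^ 4 = 1 := orderOf_dvd_iff_pow_eq_one.1 hχ.dvd
  have h2 : χ * χ ≠ 1 := sq χ ▸ pow_ne_one_of_lt_orderOf two_ne_zero (by omega)
  have h1 : χ ≠ 1 := fun h ↦ h2 (by rw [h, one_mul])
  obtain ⟨u, v, hJ⟩ := exists_int_jacobiSum_eq h4 h4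
  have hre : (jacobiSum χ χ).re = u := by simp [hJ]
  have him : (jacobiSum χ χ).im = v := by simp [hJ]
  have hnorm := normSq_jacobiSum h1 h1 h2
  have hcyc := sixteen_mul_cyclotomicNumber hχ hodd
  rw [normSq_apply, hre, him, ← sq, ← sq] at hnorm
  rw [hre, him] at hcyc
  exact ⟨u, v, him, by exact_mod_cast hnorm.symm, by exact_mod_cast hcyc⟩

end QuarticCharacters

section PrimitiveRoots

variable {F R : Type*} [Field F] [Fintype F] [Field R] {θ : F}

theorem exists_pow_eq_of_isPrimitiveRoot (hθ : IsPrimitiveRoot θ (Fintype.card F - 1)) {v : F}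
    (hv : v ≠ 0) : ∃ m < Fintype.card F - 1, θ ^ m = v :=
  have : NeZero (Fintype.card F - 1) := ⟨Nat.sub_ne_zero_of_lt Fintype.one_lt_card⟩
  hθ.eq_pow_of_pow_eq_one (FiniteField.pow_card_sub_one_eq_one v hv)

theorem exists_units_generator_of_isPrimitiveRoot
    (hθ : IsPrimitiveRoot θ (Fintype.card F - 1)) :
    ∃ g : Fˣ, (g : F) = θ ∧ ∀ x, x ∈ Subgroup.zpowers g := by
  have hθ0 : θ ≠ 0 := hθ.ne_zero (Nat.sub_ne_zero_of_lt Fintype.one_lt_card)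
  refine ⟨Units.mk0 θ hθ0, rfl, fun x ↦ ?_⟩
  obtain ⟨m, -, hm⟩ := exists_pow_eq_of_isPrimitiveRoot hθ x.ne_zero
  exact ⟨m, Units.ext (by simpa using hm)⟩

theorem exists_mulChar_apply_eq (hθ : IsPrimitiveRoot θ (Fintype.card F - 1)) {z : R}
    (hz : z ^ (Fintype.card F - 1) = 1) : ∃ χ : MulChar F R, χ θ = z := by
  classical
  obtain ⟨g, rfl, hg⟩ := exists_units_generator_of_isPrimitiveRoot hθ
  have hcard : Fintype.card F - 1 ≠ 0 := Nat.sub_ne_zero_of_lt Fintype.one_lt_card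
  have hroot : Units.ofPowEqOne z _ hz hcard ∈ rootsOfUnity (Fintype.card Fˣ) R := by
    rw [Fintype.card_units, mem_rootsOfUnity, Units.pow_ofPowEqOne]
  exact ⟨MulChar.ofRootOfUnity hroot hg, MulChar.ofRootOfUnity_spec hroot hg⟩

theorem mulChar_orderOf_eq_orderOf_apply (hθ : IsPrimitiveRoot θ (Fintype.card F - 1))
    (χ : MulChar F R) :
    orderOf χ = orderOf (χ θ) := by
  obtain ⟨g, rfl, hg⟩ := exists_units_generator_of_isPrimitiveRoot hθ
  refine orderOf_eq_orderOf_iff.2 fun m ↦ ?_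
  rw [MulChar.eq_iff hg, MulChar.pow_apply_coe, MulChar.one_apply_coe]

theorem cyclotomicClass_eq_image [DecidableEq F] [DecidableEq R]
    (hθ : IsPrimitiveRoot θ (Fintype.card F - 1)) {χ : MulChar F R} {n i : ℕ}
    (hχθ : IsPrimitiveRoot (χ θ) n) (hi : i < n) :
    cyclotomicClass χ (χ θ ^ i) =
      (range ((Fintype.card F - 1) / n)).image fun j ↦ θ ^ (i + n * j) := by
  have hdvd : n ∣ Fintype.card F - 1 :=
    hχθ.dvd_of_pow_eq_one _ (by rw [← map_pow, hθ.pow_eq_one, map_one])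
  ext v
  simp only [cyclotomicClass, mem_filter_univ, mem_image, mem_range]
  constructor
  · intro hv
    have hv0 : v ≠ 0 := by
      rintro rfl
      rw [MulChar.map_zero] at hv
      exact pow_ne_zero i (hχθ.ne_zero (by omega)) hv.symm
    obtain ⟨m, hm, rfl⟩ := exists_pow_eq_of_isPrimitiveRoot hθ hv0
    have hmi : m % n = i := by
      rw [map_pow, ← pow_mod_orderOf, ← hχθ.eq_orderOf] at hv
      exact hχθ.pow_inj (Nat.mod_lt m (by omega)) hi hv
    exact ⟨m / n, Nat.div_lt_div_of_lt_of_dvd hdvd hm, by rw [← hmi, Nat.mod_add_div]⟩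
  · rintro ⟨j, -, rfl⟩
    rw [map_pow, pow_add, pow_mul, hχθ.pow_eq_one, one_pow, mul_one]

theorem mulChar_apply_neg_one_eq_neg_one (hcard : Fintype.card F % 8 = 5)
    (hθ : IsPrimitiveRoot θ (Fintype.card F - 1)) {χ : MulChar F R}
    (hχθ : IsPrimitiveRoot (χ θ) 4) : χ (-1) = -1 := by
  obtain ⟨k, hk⟩ : ∃ k, Fintype.card F - 1 = (4 * k + 2) * 2 :=
    ⟨Fintype.card F / 8, by omega⟩
  have hF : θ ^ (4 * k + 2) = -1 := (hθ.pow (by omega) hk).eq_neg_one_of_two_right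
  have hR : χ θ ^ 2 = -1 := (hχθ.pow (by norm_num) (by norm_num)).eq_neg_one_of_two_right
  rw [← hF, map_pow, pow_add, pow_mul, hχθ.pow_eq_one, one_pow, one_mul, hR]

theorem exists_quartic_mulChar (hcard : Fintype.card F % 8 = 5)
    (hθ : IsPrimitiveRoot θ (Fintype.card F - 1)) :
    ∃ χ : MulChar F ℂ, χ θ = Complex.I ∧ orderOf χ = 4 ∧ χ (-1) = -1 := by
  have hI : Complex.I ^ (Fintype.card F - 1) = 1 := by
    obtain ⟨k, hk⟩ : 4 ∣ Fintype.card F - 1 := by omega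
    rw [hk, pow_mul, Complex.I_pow_four, one_pow]
  obtain ⟨χ, hχθ⟩ := exists_mulChar_apply_eq hθ hI
  have hχθ' : IsPrimitiveRoot (χ θ) 4 := hχθ ▸ Complex.isPrimitiveRoot_I
  exact ⟨χ, hχθ, by rw [mulChar_orderOf_eq_orderOf_apply hθ, ← hχθ'.eq_orderOf],
    mulChar_apply_neg_one_eq_neg_one hcard hθ hχθ'⟩

end PrimitiveRoots

section CycD

variable {R : Type*} [Field R] [DecidableEq R] {p θ : ℕ} [Fact p.Prime] {χ : MulChar (ZMod p) R}

theorem cycD_eq_image_val (hθ : IsPrimitiveRoot (θ : ZMod p) (p - 1))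
    (hχθ : IsPrimitiveRoot (χ θ) 4) {i : ℕ} (hi : i < 4) :
    cycD p θ i = (cyclotomicClass χ (χ θ ^ i)).image ZMod.val := by
  rw [cyclotomicClass_eq_image (by rwa [ZMod.card]) hχθ hi, ZMod.card, image_image, cycD]
  refine image_congr fun j _ ↦ ?_
  rw [Function.comp_apply, ← Nat.cast_pow, ZMod.val_natCast]

theorem sum_cycD (hθ : IsPrimitiveRoot (θ : ZMod p) (p - 1)) (hχθ : IsPrimitiveRoot (χ θ) 4)
    {ζ : R} (hζ : ζ ^ p = 1) {i : ℕ} (hi : i < 4) :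
    ∑ t ∈ cycD p θ i, ζ ^ t = gaussPeriod χ (AddChar.zmodChar p hζ) (χ θ ^ i) := by
  rw [cycD_eq_image_val hθ hχθ hi, sum_image (ZMod.val_injective p).injOn]
  rfl

theorem card_cycD_filter (hθ : IsPrimitiveRoot (θ : ZMod p) (p - 1))
    (hχθ : IsPrimitiveRoot (χ θ) 4) {i j : ℕ} (hi : i < 4) (hj : j < 4) :
    #{a ∈ cycD p θ i | (a + 1) % p ∈ cycD p θ j} =
      cyclotomicNumber χ (χ θ ^ i) (χ θ ^ j) := by
  have hval (v : ZMod p) : (v.val + 1) % p = (v + 1).val := by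
    rw [ZMod.val_add, ZMod.val_one]
  rw [cycD_eq_image_val hθ hχθ hi, cycD_eq_image_val hθ hχθ hj, filter_image,
    card_image_of_injective _ (ZMod.val_injective p)]
  simp only [hval, (ZMod.val_injective p).mem_finset_image, cyclotomicNumber, cyclotomicClass,
    filter_filter, mem_filter_univ]

end CycD

section PeriodPolynomials

open Polynomial Complex

theorem cyclotomic_eval_eq_ediv {p : ℕ} (hp : p.Prime) {b : ℤ} (hb : b ≠ 1) :
    (cyclotomic p ℤ).eval b = (b ^ p - 1) / (b - 1) := by
  have := Fact.mk hp
  rw [cyclotomic_prime, eval_geom_sum, ← geom_sum_mul,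
    Int.mul_ediv_cancel _ (sub_ne_zero.2 hb)]

theorem eval_modEq_eval_of_aeval_eq {K : Type*} [Field K] [CharZero K] {n : ℕ} (hn : 0 < n)
    {ζ : K} (hζ : IsPrimitiveRoot ζ n) {P Q : ℤ[X]}
    (h : aeval ζ P = aeval ζ Q) (b : ℤ) :
    P.eval b ≡ Q.eval b [ZMOD (cyclotomic n ℤ).eval b] := by
  have hdvd : cyclotomic n ℤ ∣ Q - P := by
    rw [cyclotomic_eq_minpoly hζ hn]
    exact minpoly.isIntegrallyClosed_dvd (hζ.isIntegral hn) (by rw [map_sub, h, sub_self])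
  rw [Int.modEq_iff_dvd, ← eval_sub]
  exact eval_dvd hdvd

/-- The Hall polynomial of the class `cycD p θ i`. It specialises to `eta4 p θ i` at `4` and to a
Gaussian period at a `p`-th root of unity. -/
noncomputable def periodPoly (p θ i : ℕ) : ℤ[X] := ∑ t ∈ cycD p θ i, X ^ t

theorem eval_four_periodPoly (p θ i : ℕ) : (periodPoly p θ i).eval 4 = eta4 p θ i := by
  simp [periodPoly, eta4, eval_finsetSum]

theorem aeval_periodPoly {R : Type*} [Field R] [DecidableEq R] {p θ : ℕ} [Fact p.Prime]
    {χ : MulChar (ZMod p) R} (hθ : IsPrimitiveRoot (θ : ZMod p) (p - 1))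
    (hχθ : IsPrimitiveRoot (χ θ) 4) {ζ : R} (hζ : ζ ^ p = 1) {i : ℕ} (hi : i < 4) :
    aeval ζ (periodPoly p θ i) = gaussPeriod χ (AddChar.zmodChar p hζ) (χ θ ^ i) := by
  simp only [periodPoly, map_sum, map_pow, aeval_X, sum_cycD hθ hχθ hζ hi]

theorem periodPoly_eval_mul_modEq {p θ : ℕ} [Fact p.Prime]
    (hθ : IsPrimitiveRoot (θ : ZMod p) (p - 1)) {χ : MulChar (ZMod p) ℂ} (hχθ : χ θ = I)
    (hχ : orderOf χ = 4) (hodd : χ (-1) = -1) {v : ℤ} (hv : (jacobiSum χ χ).im = v) (b : ℤ) :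
    let η i := (periodPoly p θ i).eval b
    4 * (2 + η 1 + 2 * η 0 + 3 * η 3) * (2 + η 3 + 2 * η 2 + 3 * η 1) ≡
      -2 * (1 - 2 * v) * (η 0 + η 2 - η 1 - η 3) + 5 * p + 1
        [ZMOD (cyclotomic p ℤ).eval b] := by
  have hp : p.Prime := Fact.out
  let P := periodPoly p θ
  let A : ℤ[X] := 4 * (2 + P 1 + 2 * P 0 + 3 * P 3) * (2 + P 3 + 2 * P 2 + 3 * P 1)
  let B : ℤ[X] := -2 * (1 - 2 * (v : ℤ[X])) * (P 0 + P 2 - P 1 - P 3) + 5 * (p : ℤ[X]) + 1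
  obtain ⟨ζ, hζ⟩ : ∃ ζ : ℂ, IsPrimitiveRoot ζ p := ⟨_, isPrimitiveRoot_exp p hp.ne_zero⟩
  have hperiod {i : ℕ} (hi : i < 4) :=
    aeval_periodPoly hθ (hχθ ▸ isPrimitiveRoot_I) hζ.pow_eq_one hi
  have hAB : aeval ζ A = aeval ζ B := by
    have hψ := AddChar.zmodChar_primitive_of_primitive_root p hζ
    have hmul := gaussPeriod_weighted_sum_mul hχ hodd hψ
    rw [hv, ZMod.card] at hmul
    simpa only [A, B, P, map_add, map_sub, map_neg, map_mul, map_one, map_ofNat, map_natCast,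
      map_intCast, ofReal_intCast, hperiod zero_lt_four, hperiod Nat.one_lt_ofNat,
      hperiod (i := 2) (by norm_num), hperiod (i := 3) (by norm_num), hχθ, pow_zero, pow_one,
      I_sq, I_pow_three] using hmul
  simpa [A, B, P] using eval_modEq_eval_of_aeval_eq hp.pos hζ hAB b

end PeriodPolynomials

theorem lemma5_part8
    (p : ℕ) (hp : p.Prime) (hp8 : p % 8 = 5)
    (x y : ℤ) (hx : x % 4 = 1) (hxy : (p : ℤ) = x ^ 2 + 4 * y ^ 2)
    (θ : ℕ) (hθ : IsPrimitiveRoot (θ : ZMod p) (p - 1))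
    (hy : 16 * (((cycD p θ 0).filter (fun a => (a + 1) % p ∈ cycD p θ 1)).card : ℤ)
        = (p : ℤ) + 1 + 2 * x - 8 * y)
    :
    4 * (2 + eta4 p θ 1 + 2 * eta4 p θ 0 + 3 * eta4 p θ 3) * (2 + eta4 p θ 3 + 2 * eta4 p θ 2 + 3 * eta4 p θ 1)
      ≡ -2 * (1 - 4 * y) * Hval p θ + 5 * (p : ℤ) + 1 [ZMOD ((4 : ℤ) ^ p - 1) / 3] := by
  have := Fact.mk hp
  obtain ⟨χ, hχθ, hχ, hodd⟩ : ∃ χ : MulChar (ZMod p) ℂ, χ θ = Complex.I ∧ orderOf χ = 4 ∧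
      χ (-1) = -1 := exists_quartic_mulChar (by rwa [ZMod.card]) (by rwa [ZMod.card])
  obtain ⟨u, v, him, hnorm, hcyc⟩ := exists_int_cyclotomicNumber_eq hχ hodd
  rw [ZMod.card] at hnorm hcyc
  have hcard := card_cycD_filter hθ (hχθ ▸ Complex.isPrimitiveRoot_I) zero_lt_four Nat.one_lt_ofNat
  rw [hχθ, pow_zero, pow_one] at hcard
  rw [hcard] at hy
  have hv : 2 * v = 4 * y := by
    linarith [eq_two_mul_of_prime_eq_sq_add_sq hp hxy hnorm (by linarith)]
  have hmod := periodPoly_eval_mul_modEq hθ hχθ hχ hodd him 4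
  rw [cyclotomic_eval_eq_ediv hp (by norm_num), hv, show (4 : ℤ) - 1 = 3 by norm_num] at hmod
  simpa only [Hval, eval_four_periodPoly] using hmod
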